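/- Let J : R^d -> R be G-Lipschitz, let delta > 0, and let hat{J}(theta) = E_{v ~ Unif(B_d)}[J(theta + delta*v)] be the delta-smoothed function (assumed differentiable at theta). Let u be uniformly distributed on the unit sphere S^{d-1} in R^d, and let eta^+ and eta^- be zero-mean random variables with variance at most sigma^2, with u, eta^+, eta^- mutually independent. Define the two-point gradient estimate g = d*( (J(theta + delta*u) + eta^+) - (J(theta - delta*u) + eta^-) )/(2*delta) * u. Then E||g - grad hat{J}(theta)||^2 <= 2*d^2*G^2 + 2*d^2*sigma^2/delta^2. -/

import Mathlib

/-!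
The noiseless estimate `h(u) u`, with `h(u) = d (J(θ + δu) - J(θ - δu)) / (2δ)`, is unbiased for
`m = ∇Ĵ(θ)`, and `|h(u)| ≤ d G` by the Lipschitz bound. Averaging first over the centred noise and
then over `u` gives
`E‖g - m‖² = E[h(u)²] - 2 E⟪h(u) u, m⟫ + ‖m‖² + (d / (2δ))² (E[(η⁺)²] + E[(η⁻)²])`,
which by unbiasedness is at most `d² G² - ‖m‖² + d² σ² / (2δ²)`.

Unbiasedness (`inner_gradient_two_point`) follows from the divergence theorem on the ball
(`hasDerivAt_setIntegral_ball`): for continuous `F` and a unit vector `e`,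
`d/dt ∫_B F(x + t e) dx = ∫_S F(u) ⟪u, e⟫ du` at `t = 0`. In polar coordinates the left integral is
`∫_S ∫_0^ρ r ^ (d - 1) F(r u) dr du`, where `ρ = ρ_t(u)` is the distance from the origin to the
boundary of the ball `B + t e` in the direction `u` (`radial`); one differentiates under the outer
integral, using `ρ_0 = 1` and `∂ρ/∂t = ⟪u, e⟫` at `t = 0`.
-/

open MeasureTheory Metric

/-- The uniform probability measure on the closed Euclidean unit ball in `ℝ^d`. -/
noncomputable def uniformBall (d : ℕ) : Measure (EuclideanSpace ℝ (Fin d)) :=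
  (volume (closedBall (0 : EuclideanSpace ℝ (Fin d)) 1))⁻¹ •
    volume.restrict (closedBall (0 : EuclideanSpace ℝ (Fin d)) 1)

/-- The uniform probability measure on the Euclidean unit sphere in `ℝ^d`
(the normalized surface measure, pushed forward to `ℝ^d`). -/
noncomputable def uniformSphere (d : ℕ) : Measure (EuclideanSpace ℝ (Fin d)) :=
  (((volume : Measure (EuclideanSpace ℝ (Fin d))).toSphere Set.univ)⁻¹ •
    (volume : Measure (EuclideanSpace ℝ (Fin d))).toSphere).map Subtype.val

/-! ### The boundary of a translated unit ball -/

/-- The distance from the origin to the boundary of the unit ball centred at `t • e`, in a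
direction `u` with `a = ⟪u, e⟫`, for unit vectors `e`, `u` and `|t| < 1`. -/
noncomputable def radial (a t : ℝ) : ℝ := t * a + √(1 - t ^ 2 + (t * a) ^ 2)

theorem norm_sub_le_one_iff {E : Type*} [NormedAddCommGroup E] [InnerProductSpace ℝ E]
    {u e : E} (hu : ‖u‖ = 1) (he : ‖e‖ = 1) {t r : ℝ} (ht : |t| < 1) (hr : 0 < r) :
    ‖r • u - t • e‖ ≤ 1 ↔ r ≤ radial (inner ℝ u e) t := by
  have ht2 : t ^ 2 < 1 := (sq_lt_one_iff_abs_lt_one t).2 ht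
  rw [← sq_le_one_iff₀ (norm_nonneg _), norm_sub_sq_real, norm_smul, norm_smul, hu, he,
    real_inner_smul_left, real_inner_smul_right, radial, ← sub_le_iff_le_add']
  set a := inner ℝ u e
  simp only [Real.norm_eq_abs, mul_one, sq_abs]
  have hs := Real.sq_sqrt (show 0 ≤ 1 - t ^ 2 + (t * a) ^ 2 by nlinarith [sq_nonneg (t * a)])
  have hs0 := Real.sqrt_nonneg (1 - t ^ 2 + (t * a) ^ 2)
  constructor
  · intro h
    exact Real.le_sqrt_of_sq_le (by linarith)
  · intro h
    -- The origin lies inside the shifted ball, so the lower root `t * a - √…` is nonpositive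
    -- and the lower bound for `r` is automatic.
    have h2 : -√(1 - t ^ 2 + (t * a) ^ 2) ≤ r - t * a := by
      have : t * a ≤ √(1 - t ^ 2 + (t * a) ^ 2) := Real.le_sqrt_of_sq_le (by linarith)
      linarith
    nlinarith [sq_le_sq' h2 h]

/-- `radial a` is differentiable near `0` with bounds uniform in `a`, and its derivative at `0` is
`a`: moving the ball by `t • e` moves its boundary in the direction `u` by `t * ⟪u, e⟫` to first
order. -/
theorem radial_facts {a t : ℝ} (ha : |a| ≤ 1) (ht : |t| < 1 / 2) :
    0 ≤ radial a t ∧ radial a t ≤ 2 ∧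
      ∃ b, |b| ≤ 2 ∧ HasDerivAt (radial a) b t ∧ (t = 0 → b = a) := by
  have ha2 : a ^ 2 ≤ 1 := (sq_le_one_iff_abs_le_one a).2 ha
  have ht2 : t ^ 2 < 1 / 4 := by nlinarith [sq_abs t, abs_nonneg t]
  have hta : |t * a| ≤ 1 / 2 := by
    rw [abs_mul]; nlinarith [abs_nonneg t, abs_nonneg a]
  have hta2 := sq_nonneg (t * a)
  have hpos : 0 < 1 - t ^ 2 + (t * a) ^ 2 := by linarith
  have hs1 : √(1 - t ^ 2 + (t * a) ^ 2) ≤ 1 := Real.sqrt_le_one.2 (by nlinarith [sq_nonneg t])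
  have hs2 : 1 / 2 ≤ √(1 - t ^ 2 + (t * a) ^ 2) := Real.le_sqrt_of_sq_le (by linarith)
  obtain ⟨h1, h2⟩ := abs_le.1 hta
  refine ⟨by unfold radial; linarith, by unfold radial; linarith,
    a + (-(2 * t) + 2 * (t * a) * a) / (2 * √(1 - t ^ 2 + (t * a) ^ 2)), ?_, ?_, ?_⟩
  · have : |(-(2 * t) + 2 * (t * a) * a) / (2 * √(1 - t ^ 2 + (t * a) ^ 2))| ≤ 1 := by
      rw [abs_div, div_le_one (by positivity), abs_of_pos (by positivity : 0 < 2 * √_),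
        show -(2 * t) + 2 * (t * a) * a = -2 * t * (1 - a ^ 2) by ring, abs_mul, abs_mul,
        abs_of_nonneg (sub_nonneg.2 ha2)]
      norm_num
      nlinarith [abs_nonneg t, sq_nonneg a]
    exact (abs_add_le _ _).trans (by linarith)
  · unfold radial
    have h1 : HasDerivAt (fun t : ℝ => t * a) a t := by simpa using (hasDerivAt_id t).mul_const a
    have h2 : HasDerivAt (fun t : ℝ => 1 - t ^ 2 + (t * a) ^ 2) (-(2 * t) + 2 * (t * a) * a) t := by
      simpa using ((hasDerivAt_pow 2 t).const_sub 1).fun_add (h1.fun_pow 2)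
    exact h1.fun_add (h2.sqrt hpos.ne')
  · rintro rfl; simp

/-! ### Polar coordinates and the divergence theorem on the ball -/

section

variable {E : Type*} [NormedAddCommGroup E] [InnerProductSpace ℝ E] [FiniteDimensional ℝ E]
  [Nontrivial E] [MeasurableSpace E] [BorelSpace E]

theorem integral_polar (μ : Measure E) [μ.IsAddHaarMeasure] {f : E → ℝ} (hf : Integrable f μ) :
    ∫ x, f x ∂μ = ∫ u : sphere (0 : E) 1, (∫ r in Set.Ioi (0 : ℝ),
      r ^ (Module.finrank ℝ E - 1) * f (r • (u : E))) ∂μ.toSphere := by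
  have hmp := μ.measurePreserving_homeomorphUnitSphereProd
  have hemb := (homeomorphUnitSphereProd E).measurableEmbedding
  let g : sphere (0 : E) 1 × Set.Ioi (0 : ℝ) → ℝ := fun p => f ((p.2 : ℝ) • (p.1 : E))
  have hg : ∀ x : ({0}ᶜ : Set E), g (homeomorphUnitSphereProd E x) = f x := by
    intro x
    have hx : ‖(x : E)‖ ≠ 0 := norm_ne_zero_iff.2 x.2
    simp [g, smul_smul, hx]
  have hint : Integrable g (μ.toSphere.prod (.volumeIoiPow (Module.finrank ℝ E - 1))) := by
    rw [← hmp.integrable_comp_emb hemb]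
    have : g ∘ homeomorphUnitSphereProd E = f ∘ Subtype.val := funext hg
    rw [this, ← integrableOn_iff_comap_subtypeVal (measurableSet_singleton _).compl]
    exact hf.integrableOn
  calc
    ∫ x, f x ∂μ = ∫ x : ({0}ᶜ : Set E), f x ∂(μ.comap (↑)) := by
      rw [integral_subtype_comap (measurableSet_singleton _).compl f, restrict_compl_singleton]
    _ = ∫ p, g p ∂(μ.toSphere.prod (.volumeIoiPow (Module.finrank ℝ E - 1))) := by
      rw [← hmp.integral_comp hemb g]
      simp only [hg]
    _ = _ := by
      rw [integral_prod _ hint]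
      refine integral_congr_ae (.of_forall fun u => ?_)
      simp only [Measure.volumeIoiPow, ENNReal.ofReal]
      rw [integral_withDensity_eq_integral_smul,
        integral_subtype_comap measurableSet_Ioi
          fun a ↦ Real.toNNReal (a ^ (Module.finrank ℝ E - 1)) • f (a • (u : E)),
        setIntegral_congr_fun measurableSet_Ioi fun x hx ↦ ?_]
      · rw [NNReal.smul_def, Real.coe_toNNReal _ (pow_nonneg (Set.mem_Ioi.1 hx).le _), smul_eq_mul]
      · exact (measurable_subtype_coe.pow_const _).real_toNNReal

/-- Translating the integrand by `t • e` amounts to translating the ball, and polar coordinates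
turn the translated ball into the region under the graph of `radial`. -/
theorem setIntegral_shifted_ball {F : E → ℝ} (hF : Continuous F) (μ : Measure E)
    [μ.IsAddHaarMeasure] {e : E} (he : ‖e‖ = 1) {t : ℝ} (ht : |t| < 1 / 2) :
    ∫ x in closedBall (0 : E) 1, F (x + t • e) ∂μ =
      ∫ u : sphere (0 : E) 1, (∫ r in (0 : ℝ)..radial (inner ℝ (u : E) e) t,
        r ^ (Module.finrank ℝ E - 1) * F (r • (u : E))) ∂μ.toSphere := by
  have h1 : ∫ x in closedBall (0 : E) 1, F (x + t • e) ∂μ =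
      ∫ x, (closedBall (t • e) 1).indicator F x ∂μ := by
    rw [← integral_indicator measurableSet_closedBall,
      ← integral_add_right_eq_self ((closedBall (t • e) 1).indicator F) (t • e)]
    congr 1 with x
    simp [Set.indicator, dist_eq_norm]
  rw [h1, integral_polar μ ((integrable_indicator_iff measurableSet_closedBall).2
    (hF.continuousOn.integrableOn_compact (isCompact_closedBall _ _)))]
  congr 1 with u
  have hu : ‖(u : E)‖ = 1 := by simp
  have ha : |inner ℝ (u : E) e| ≤ 1 := by
    simpa [hu, he] using abs_real_inner_le_norm (u : E) e
  rw [intervalIntegral.integral_of_le (radial_facts ha ht).1, ← Set.Ioi_inter_Iic,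
    ← setIntegral_indicator measurableSet_Iic]
  refine setIntegral_congr_fun measurableSet_Ioi fun r hr => ?_
  simp only [Set.indicator, Set.mem_Iic, mem_closedBall, dist_eq_norm,
    norm_sub_le_one_iff hu he (by linarith : |t| < 1) hr]
  split_ifs <;> simp

/-- Divergence theorem for the constant field `e` on the unit ball. Only continuity of `F` is
needed: the derivative falls on the moving boundary rather than on `F`. -/
theorem hasDerivAt_setIntegral_ball {F : E → ℝ} (hF : Continuous F) (μ : Measure E)
    [μ.IsAddHaarMeasure] {e : E} (he : ‖e‖ = 1) :
    HasDerivAt (fun t : ℝ => ∫ x in closedBall (0 : E) 1, F (x + t • e) ∂μ)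
      (∫ u : sphere (0 : E) 1, F u * inner ℝ (u : E) e ∂μ.toSphere) 0 := by
  set n := Module.finrank ℝ E - 1
  have hnhds : ball (0 : ℝ) (1 / 2) ∈ nhds 0 := ball_mem_nhds _ (by norm_num)
  have habs : ∀ {t : ℝ}, t ∈ ball (0 : ℝ) (1 / 2) → |t| < 1 / 2 := by
    intro t ht; simpa using ht
  have ha : ∀ u : sphere (0 : E) 1, |inner ℝ (u : E) e| ≤ 1 := fun u => by
    simpa [he] using abs_real_inner_le_norm (u : E) e
  obtain ⟨C, hC⟩ := (isCompact_closedBall (0 : E) 2).exists_bound_of_continuousOn hF.continuousOn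
  have hcont : ∀ t, Continuous fun u : sphere (0 : E) 1 =>
      ∫ r in (0 : ℝ)..radial (inner ℝ (u : E) e) t, r ^ n * F (r • (u : E)) := by
    intro t
    refine intervalIntegral.continuous_parametric_intervalIntegral_of_continuous ?_ ?_
    · fun_prop
    · unfold radial; fun_prop
  -- The derivative in `t` of the radial integral, by the fundamental theorem of calculus.
  let F' : ℝ → sphere (0 : E) 1 → ℝ := fun t u =>
    radial (inner ℝ (u : E) e) t ^ n * F (radial (inner ℝ (u : E) e) t • (u : E)) *
      deriv (radial (inner ℝ (u : E) e)) t
  have hF'0 : ∀ u, F' 0 u = F u * inner ℝ (u : E) e := by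
    intro u
    obtain ⟨-, -, b, -, hb, hb0⟩ := radial_facts (t := 0) (ha u) (by norm_num)
    simp only [F', hb.deriv, hb0 rfl]
    simp [radial]
  have key := (hasDerivAt_integral_of_dominated_loc_of_deriv_le (μ := μ.toSphere) (F' := F')
    (F := fun t u => ∫ r in (0 : ℝ)..radial (inner ℝ (u : E) e) t, r ^ n * F (r • (u : E)))
    (bound := fun _ => 2 ^ n * C * 2) hnhds ?_ ?_ ?_ ?_ ?_ ?_).2
  · simp only [hF'0] at key
    refine key.congr_of_eventuallyEq ?_
    filter_upwards [hnhds] with t ht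
    exact setIntegral_shifted_ball hF μ he (habs ht)
  · exact .of_forall fun t => (hcont t).aestronglyMeasurable
  · exact (hcont 0).integrable_of_hasCompactSupport (HasCompactSupport.of_compactSpace _)
  · simp only [funext hF'0]
    exact Continuous.aestronglyMeasurable (by fun_prop)
  · refine .of_forall fun u t ht => ?_
    obtain ⟨h0, h2, b, hb2, hb, -⟩ := radial_facts (ha u) (habs ht)
    have hFu := hC (radial (inner ℝ (u : E) e) t • (u : E)) (by
      simpa [norm_smul, abs_of_nonneg h0] using h2)
    simp only [F', hb.deriv, norm_mul, norm_pow, Real.norm_eq_abs, abs_of_nonneg h0] at hFu ⊢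
    have : 0 ≤ C := (abs_nonneg _).trans hFu
    gcongr
  · exact integrable_const _
  · refine .of_forall fun u t ht => ?_
    obtain ⟨-, -, b, -, hb, -⟩ := radial_facts (ha u) (habs ht)
    have hc : Continuous fun r : ℝ => r ^ n * F (r • (u : E)) := by fun_prop
    have := (hc.integral_hasStrictDerivAt 0 (radial (inner ℝ (u : E) e) t)).hasDerivAt.comp t hb
    simpa [F', hb.deriv, Function.comp_def] using this

end

/-! ### Uniform measures on the ball and the sphere -/

section
variable {d : ℕ}

theorem integral_uniformBall (f : EuclideanSpace ℝ (Fin d) → ℝ) :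
    ∫ v, f v ∂(uniformBall d) =
      (volume.real (closedBall (0 : EuclideanSpace ℝ (Fin d)) 1))⁻¹ *
        ∫ v in closedBall (0 : EuclideanSpace ℝ (Fin d)) 1, f v := by
  rw [uniformBall, integral_smul_measure, ENNReal.toReal_inv, smul_eq_mul, measureReal_def]

theorem integral_uniformSphere (f : EuclideanSpace ℝ (Fin d) → ℝ) :
    ∫ u, f u ∂(uniformSphere d) =
      (d * volume.real (closedBall (0 : EuclideanSpace ℝ (Fin d)) 1))⁻¹ *
        ∫ u : sphere (0 : EuclideanSpace ℝ (Fin d)) 1, f u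
          ∂(volume : Measure (EuclideanSpace ℝ (Fin d))).toSphere := by
  rw [uniformSphere, (MeasurableEmbedding.subtype_coe isClosed_sphere.measurableSet).integral_map,
    integral_smul_measure, ENNReal.toReal_inv, ← measureReal_def,
    Measure.toSphere_real_apply_univ, finrank_euclideanSpace_fin, smul_eq_mul, measureReal_def,
    measureReal_def, Measure.addHaar_unitClosedBall_eq_addHaar_unitBall]

theorem isProbabilityMeasure_uniformSphere (hd : 1 ≤ d) :
    IsProbabilityMeasure (uniformSphere d) := by
  have : Nonempty (Fin d) := ⟨⟨0, hd⟩⟩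
  have : IsProbabilityMeasure (((volume : Measure (EuclideanSpace ℝ (Fin d))).toSphere Set.univ)⁻¹ •
    (volume : Measure (EuclideanSpace ℝ (Fin d))).toSphere) :=
    ⟨by
      rw [Measure.smul_apply, smul_eq_mul]
      exact ENNReal.inv_mul_cancel
        (Measure.measure_univ_ne_zero.2 (Measure.toSphere_ne_zero _)) (measure_ne_top _ _)⟩
  exact Measure.isProbabilityMeasure_map measurable_subtype_coe.aemeasurable

theorem ae_norm_eq_one : ∀ᵐ u ∂(uniformSphere d), ‖u‖ = 1 := by
  rw [uniformSphere, (MeasurableEmbedding.subtype_coe isClosed_sphere.measurableSet).ae_map_iff]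
  exact .of_forall fun u => by simp

theorem Continuous.integrable_uniformSphere (hd : 1 ≤ d) {f : EuclideanSpace ℝ (Fin d) → ℝ}
    (hf : Continuous f) : Integrable f (uniformSphere d) := by
  have := isProbabilityMeasure_uniformSphere hd
  obtain ⟨C, hC⟩ := (isCompact_sphere (0 : EuclideanSpace ℝ (Fin d)) 1).exists_bound_of_continuousOn
    hf.continuousOn
  refine .of_bound hf.aestronglyMeasurable C ?_
  filter_upwards [ae_norm_eq_one] with u hu
  exact hC u (by simpa using hu)

/-! ### Unbiasedness -/

/-- One-point gradient formula `δ ∇Ĵ(θ) = d · E[J(θ + δ u) u]`, tested against `w`. The sign of `δ`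
is unrestricted, so that the formula can also be used with `-δ`. -/
theorem inner_gradient_smoothed (hd : 1 ≤ d) {J : EuclideanSpace ℝ (Fin d) → ℝ}
    (hJ : Continuous J) (δ : ℝ) {θ : EuclideanSpace ℝ (Fin d)}
    (hdiff : DifferentiableAt ℝ (fun θ' => ∫ v, J (θ' + δ • v) ∂(uniformBall d)) θ)
    (w : EuclideanSpace ℝ (Fin d)) :
    δ * inner ℝ (gradient (fun θ' => ∫ v, J (θ' + δ • v) ∂(uniformBall d)) θ) w =
      d * ∫ u, J (θ + δ • u) * inner ℝ u w ∂(uniformSphere d) := by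
  have : Nonempty (Fin d) := ⟨⟨0, hd⟩⟩
  rcases eq_or_ne w 0 with rfl | hw
  · simp
  have hw0 : ‖w‖ ≠ 0 := norm_ne_zero_iff.2 hw
  set m := gradient (fun θ' => ∫ v, J (θ' + δ • v) ∂(uniformBall d)) θ with hm
  let e := ‖w‖⁻¹ • w
  have he : ‖e‖ = 1 := by simp [e, norm_smul, hw0]
  have hwe : w = ‖w‖ • e := by simp [e, smul_smul, hw0]
  set V := volume.real (closedBall (0 : EuclideanSpace ℝ (Fin d)) 1) with hV
  have h1 : HasDerivAt (fun t : ℝ => ∫ v, J ((θ + (t * δ) • e) + δ • v) ∂(uniformBall d))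
      (δ * inner ℝ m e) 0 := by
    have hc : HasDerivAt (fun t : ℝ => θ + (t * δ) • e) (δ • e) 0 := by
      simpa using (((hasDerivAt_id (0 : ℝ)).mul_const δ).smul_const e).const_add θ
    have hg := hdiff.hasGradientAt.hasFDerivAt
    have := HasFDerivAt.comp_hasDerivAt_of_eq (0 : ℝ) hg hc (by simp)
    simpa [inner_smul_right, hm, Function.comp_def] using this
  have h2 := (hasDerivAt_setIntegral_ball (F := fun x => J (θ + δ • x)) (by fun_prop)
    (volume : Measure (EuclideanSpace ℝ (Fin d))) he).const_mul V⁻¹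
  have h3 : δ * inner ℝ m e = d * ∫ u, J (θ + δ • u) * inner ℝ u e ∂(uniformSphere d) := by
    have hd0 : (d : ℝ) ≠ 0 := by positivity
    rw [integral_uniformSphere, ← mul_assoc, mul_inv, ← mul_assoc, mul_inv_cancel₀ hd0, one_mul]
    refine h1.unique (h2.congr_of_eventuallyEq (.of_forall fun t => ?_))
    beta_reduce
    rw [integral_uniformBall]
    simp only [smul_add, smul_smul, mul_comm t δ]
    congr! 4
    abel
  rw [hwe]
  simp only [inner_smul_right, mul_left_comm _ ‖w‖, integral_const_mul, h3]

/-- The noiseless two-point estimate is unbiased. Since the ball is symmetric, `Ĵ` is unchanged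
under `δ ↦ -δ`, and the claim is the average of the one-point formulas for `δ` and `-δ`. -/
theorem inner_gradient_two_point (hd : 1 ≤ d) {J : EuclideanSpace ℝ (Fin d) → ℝ}
    (hJ : Continuous J) (δ : ℝ) {θ : EuclideanSpace ℝ (Fin d)}
    (hdiff : DifferentiableAt ℝ (fun θ' => ∫ v, J (θ' + δ • v) ∂(uniformBall d)) θ)
    (w : EuclideanSpace ℝ (Fin d)) :
    2 * δ * inner ℝ (gradient (fun θ' => ∫ v, J (θ' + δ • v) ∂(uniformBall d)) θ) w =
      d * ∫ u, (J (θ + δ • u) - J (θ - δ • u)) * inner ℝ u w ∂(uniformSphere d) := by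
  have heven : (fun θ' => ∫ v, J (θ' + (-δ) • v) ∂(uniformBall d)) =
      fun θ' => ∫ v, J (θ' + δ • v) ∂(uniformBall d) := by
    funext θ'
    rw [integral_uniformBall, integral_uniformBall, ← integral_indicator measurableSet_closedBall,
      ← integral_indicator measurableSet_closedBall, ← integral_neg_eq_self]
    congr! 3 with v
    simp [Set.indicator]
  have h1 := inner_gradient_smoothed hd hJ δ hdiff w
  have h2 := inner_gradient_smoothed hd hJ (-δ) (heven ▸ hdiff) w
  rw [heven] at h2
  simp only [sub_mul]
  rw [integral_sub (Continuous.integrable_uniformSphere hd (by fun_prop))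
    (Continuous.integrable_uniformSphere hd (by fun_prop))]
  simp only [neg_smul, ← sub_eq_add_neg] at h2
  linarith

end

/-! ### The variance bound -/

/-- Expectation of a quadratic polynomial in the difference of two independent centred random
variables: the linear term and the cross term vanish. -/
theorem integral_noise {νp νm : Measure ℝ} [IsProbabilityMeasure νp] [IsProbabilityMeasure νm]
    (hip1 : Integrable (fun x : ℝ => x) νp) (him1 : Integrable (fun x : ℝ => x) νm)
    (hip2 : Integrable (fun x : ℝ => x ^ 2) νp) (him2 : Integrable (fun x : ℝ => x ^ 2) νm)
    (hp0 : ∫ x, x ∂νp = 0) (hm0 : ∫ x, x ∂νm = 0) (K L M : ℝ) :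
    ∫ p : ℝ × ℝ, (K + L * (p.1 - p.2) + M * (p.1 - p.2) ^ 2) ∂(νp.prod νm) =
      K + M * (∫ x, x ^ 2 ∂νp + ∫ x, x ^ 2 ∂νm) := by
  have i1 : Integrable (fun p : ℝ × ℝ => p.1) (νp.prod νm) := hip1.comp_fst νm
  have i2 : Integrable (fun p : ℝ × ℝ => p.2) (νp.prod νm) := him1.comp_snd νp
  have i3 : Integrable (fun p : ℝ × ℝ => p.1 ^ 2) (νp.prod νm) := hip2.comp_fst νm
  have i4 : Integrable (fun p : ℝ × ℝ => p.2 ^ 2) (νp.prod νm) := him2.comp_snd νp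
  have i5 : Integrable (fun p : ℝ × ℝ => p.1 * p.2) (νp.prod νm) := hip1.mul_prod him1
  have e1 : ∫ p : ℝ × ℝ, p.1 ∂(νp.prod νm) = 0 := by
    rw [integral_fun_fst (fun x : ℝ => x), hp0, smul_zero]
  have e2 : ∫ p : ℝ × ℝ, p.2 ∂(νp.prod νm) = 0 := by
    rw [integral_fun_snd (fun x : ℝ => x), hm0, smul_zero]
  have e3 : ∫ p : ℝ × ℝ, p.1 ^ 2 ∂(νp.prod νm) = ∫ x, x ^ 2 ∂νp := by
    rw [integral_fun_fst (fun x : ℝ => x ^ 2)]; simp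
  have e4 : ∫ p : ℝ × ℝ, p.2 ^ 2 ∂(νp.prod νm) = ∫ x, x ^ 2 ∂νm := by
    rw [integral_fun_snd (fun x : ℝ => x ^ 2)]; simp
  have e5 : ∫ p : ℝ × ℝ, p.1 * p.2 ∂(νp.prod νm) = 0 := by
    rw [integral_prod_mul (fun x : ℝ => x) (fun x : ℝ => x), hp0, zero_mul]
  have hexp : (fun p : ℝ × ℝ => K + L * (p.1 - p.2) + M * (p.1 - p.2) ^ 2) = fun p =>
      K + L * (p.1 - p.2) + M * (p.1 ^ 2 + p.2 ^ 2 - 2 * (p.1 * p.2)) := by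
    funext p; ring
  have i12 : Integrable (fun p : ℝ × ℝ => L * (p.1 - p.2)) (νp.prod νm) := (i1.sub i2).const_mul L
  have iK : Integrable (fun p : ℝ × ℝ => K + L * (p.1 - p.2)) (νp.prod νm) :=
    (integrable_const K).add i12
  have i34 : Integrable (fun p : ℝ × ℝ => p.1 ^ 2 + p.2 ^ 2) (νp.prod νm) := i3.add i4
  have iM : Integrable (fun p : ℝ × ℝ => M * (p.1 ^ 2 + p.2 ^ 2 - 2 * (p.1 * p.2)))
      (νp.prod νm) := (i34.sub (i5.const_mul 2)).const_mul M
  rw [hexp, integral_add iK iM, integral_add (integrable_const K) i12, integral_const_mul,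
    integral_const_mul, integral_sub i1 i2, integral_sub i34 (i5.const_mul 2),
    integral_add i3 i4, integral_const_mul, e1, e2, e3, e4, e5]
  simp

/-- variance bound for the two-point zeroth-order gradient estimate.  The
randomness `ω = (u, η⁺, η⁻)` is drawn from the product of the uniform sphere measure and
the two (independent) noise distributions `ν⁺`, `ν⁻`. -/
theorem two_point_variance_bound (d : ℕ) (hd : 1 ≤ d) (G δ σ : ℝ)
    (hG : 0 ≤ G) (hδ : 0 < δ) (hσ : 0 ≤ σ)
    (J : EuclideanSpace ℝ (Fin d) → ℝ)
    (hJ : ∀ x y, |J x - J y| ≤ G * ‖x - y‖)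
    (θ : EuclideanSpace ℝ (Fin d))
    (hdiff : DifferentiableAt ℝ
      (fun θ' => ∫ v, J (θ' + δ • v) ∂(uniformBall d)) θ)
    (νp νm : Measure ℝ) (hνp : IsProbabilityMeasure νp) (hνm : IsProbabilityMeasure νm)
    (hip1 : Integrable (fun x : ℝ => x) νp) (him1 : Integrable (fun x : ℝ => x) νm)
    (hip2 : Integrable (fun x : ℝ => x ^ 2) νp) (him2 : Integrable (fun x : ℝ => x ^ 2) νm)
    (hp0 : ∫ x, x ∂νp = 0) (hm0 : ∫ x, x ∂νm = 0)
    (hpv : ∫ x, x ^ 2 ∂νp ≤ σ ^ 2) (hmv : ∫ x, x ^ 2 ∂νm ≤ σ ^ 2) :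
    ∫ ω : EuclideanSpace ℝ (Fin d) × ℝ × ℝ,
        ‖(((d : ℝ) * ((J (θ + δ • ω.1) + ω.2.1) - (J (θ - δ • ω.1) + ω.2.2)) / (2 * δ)) • ω.1
            - gradient (fun θ' => ∫ v, J (θ' + δ • v) ∂(uniformBall d)) θ)‖ ^ 2
        ∂((uniformSphere d).prod (νp.prod νm))
      ≤ 2 * d ^ 2 * G ^ 2 + 2 * d ^ 2 * σ ^ 2 / δ ^ 2 := by
  have hprob := isProbabilityMeasure_uniformSphere hd
  have hJc : Continuous J :=
    (LipschitzWith.of_dist_le_mul (K := G.toNNReal) fun x y => by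
      rw [Real.dist_eq, dist_eq_norm, Real.coe_toNNReal G hG]; exact hJ x y).continuous
  set m := gradient (fun θ' => ∫ v, J (θ' + δ • v) ∂(uniformBall d)) θ with hm
  set S := ∫ x, x ^ 2 ∂νp + ∫ x, x ^ 2 ∂νm with hS
  -- Testing unbiasedness against the gradient itself gives `E⟪h(u) u, m⟫ = ‖m‖ ^ 2`
  -- for the noiseless estimate `h(u) u`.
  have hcross := inner_gradient_two_point hd hJc δ hdiff m
  rw [← hm, real_inner_self_eq_norm_sq] at hcross
  let c : ℝ := d / (2 * δ)
  let D : EuclideanSpace ℝ (Fin d) → ℝ := fun u => J (θ + δ • u) - J (θ - δ • u)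
  have hDc : Continuous D := by fun_prop
  have hD : ∀ u, ‖u‖ = 1 → (c * D u) ^ 2 ≤ d ^ 2 * G ^ 2 := by
    intro u hu
    have h := hJ (θ + δ • u) (θ - δ • u)
    have h2 : θ + δ • u - (θ - δ • u) = (2 * δ) • u := by module
    rw [h2, norm_smul, hu, mul_one, Real.norm_of_nonneg (by positivity)] at h
    have h3 : |c * D u| ≤ d * G := by
      rw [abs_mul, abs_of_nonneg (by positivity : 0 ≤ c)]
      calc c * |D u| ≤ c * (G * (2 * δ)) := by gcongr
        _ = d * G := by simp only [c]; field_simp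
    calc (c * D u) ^ 2 = |c * D u| ^ 2 := (sq_abs _).symm
      _ ≤ (d * G) ^ 2 := by gcongr
      _ = d ^ 2 * G ^ 2 := by ring
  have hcS : c ^ 2 * S ≤ 2 * d ^ 2 * σ ^ 2 / δ ^ 2 := by
    calc c ^ 2 * S ≤ c ^ 2 * (σ ^ 2 + σ ^ 2) := by gcongr; exact add_le_add hpv hmv
      _ = (1 / 4) * (2 * d ^ 2 * σ ^ 2 / δ ^ 2) := by simp only [c]; field_simp; ring
      _ ≤ _ := by
        have : 0 ≤ 2 * d ^ 2 * σ ^ 2 / δ ^ 2 := by positivity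
        linarith
  by_cases hint : Integrable (fun ω : EuclideanSpace ℝ (Fin d) × ℝ × ℝ =>
      ‖(((d : ℝ) * ((J (θ + δ • ω.1) + ω.2.1) - (J (θ - δ • ω.1) + ω.2.2)) / (2 * δ)) • ω.1
            - m)‖ ^ 2) ((uniformSphere d).prod (νp.prod νm))
  swap
  -- The Bochner integral of a non-integrable function is `0`.
  · rw [integral_undef hint]
    positivity
  rw [integral_prod _ hint]
  -- Averaging over the noise for a fixed direction `u`.
  have hcond : ∀ᵐ u ∂(uniformSphere d), ∫ p : ℝ × ℝ,
      ‖(((d : ℝ) * ((J (θ + δ • u) + p.1) - (J (θ - δ • u) + p.2)) / (2 * δ)) • u - m)‖ ^ 2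
        ∂(νp.prod νm) = (c * D u) ^ 2 - 2 * (c * (D u * inner ℝ u m)) + ‖m‖ ^ 2 + c ^ 2 * S := by
    filter_upwards [ae_norm_eq_one] with u hu
    rw [hS, ← integral_noise hip1 him1 hip2 him2 hp0 hm0 _ (2 * c * (c * D u - inner ℝ u m))]
    congr 1 with p
    rw [norm_sub_sq_real, norm_smul, hu, real_inner_smul_left, mul_one, Real.norm_eq_abs, sq_abs]
    simp only [c, D]
    ring
  have hcr : Integrable (fun u => 2 * (c * (D u * inner ℝ u m))) (uniformSphere d) :=
    Continuous.integrable_uniformSphere hd (by fun_prop)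
  calc _ = ∫ u, ((c * D u) ^ 2 - 2 * (c * (D u * inner ℝ u m)) + ‖m‖ ^ 2 + c ^ 2 * S)
        ∂(uniformSphere d) := integral_congr_ae hcond
    _ ≤ ∫ u, ((d ^ 2 * G ^ 2 + ‖m‖ ^ 2 + c ^ 2 * S) - 2 * (c * (D u * inner ℝ u m)))
        ∂(uniformSphere d) := by
      refine integral_mono_ae (Continuous.integrable_uniformSphere hd (by fun_prop))
        ((integrable_const _).sub hcr) ?_
      filter_upwards [ae_norm_eq_one] with u hu
      linarith [hD u hu]
    _ = d ^ 2 * G ^ 2 + c ^ 2 * S - ‖m‖ ^ 2 := by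
      rw [integral_sub (integrable_const _) hcr, integral_const_mul, integral_const_mul]
      have : c * ∫ u, D u * inner ℝ u m ∂(uniformSphere d) = ‖m‖ ^ 2 := by
        simp only [c, D]
        rw [div_mul_eq_mul_div, ← hcross]
        field_simp
      rw [this]
      simp
      ring
    _ ≤ _ := by
      have : 0 ≤ (d : ℝ) ^ 2 * G ^ 2 := by positivity
      linarith [sq_nonneg ‖m‖]
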